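/- arXiv:2407.15536 — 9 statements merged into one kernel-verified Lean document; each statement's English description precedes it below -/
import Mathlib

section
/- Let u, ρ, σ, κ be real numbers and write i for the imaginary unit. Suppose d : ℝ → ℂ is differentiable at κ, satisfies d(x)² = (x − iρσu)² + σ²(iu + u²) for all x in a neighborhood of κ, d(κ) ≠ 0, and κ − iρσu + d(κ) ≠ 0. Define g(x) = (x − iρσu − d(x))/(x − iρσu + d(x)). Then g is differentiable at κ and its derivative at κ equals −2g(κ)/d(κ). -/
open Complex

theorem heston_deriv_g_kappa (u ρ σ κ : ℝ) (d g : ℝ → ℂ)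
    (hdiff : DifferentiableAt ℝ d κ)
    (hsq : ∀ᶠ x in nhds κ,
      d x ^ 2 = ((x : ℂ) - I * ρ * σ * u) ^ 2 + σ ^ 2 * (I * u + u ^ 2))
    (hne : d κ ≠ 0)
    (hne2 : (κ : ℂ) - I * ρ * σ * u + d κ ≠ 0)
    (hg : ∀ x : ℝ, g x = ((x : ℂ) - I * ρ * σ * u - d x) / ((x : ℂ) - I * ρ * σ * u + d x)) :
    HasDerivAt g (-2 * g κ / d κ) κ := by
  have hd := hdiff.hasDerivAt
  have hb : HasDerivAt (fun x : ℝ => (x : ℂ) - I * ρ * σ * u) 1 κ :=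
    (Complex.ofRealCLM.hasDerivAt (x := κ)).sub_const _
  have h1 : HasDerivAt (fun x => d x * d x) (deriv d κ * d κ + d κ * deriv d κ) κ := hd.mul hd
  have h2 := (hb.mul hb).add_const ((σ : ℂ) ^ 2 * (I * u + u ^ 2))
  have h3 := h2.congr_of_eventuallyEq (f₁ := fun x => d x * d x) (by
    filter_upwards [hsq] with x hx
    simp only [Pi.mul_apply]
    rw [← sq, hx]; ring)
  have h4 := h1.unique h3
  have hD : deriv d κ = ((κ : ℂ) - I * ρ * σ * u) / d κ := by
    rw [eq_div_iff hne]
    linear_combination h4 / 2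
  have hq := (hb.sub hd).div (hb.add hd) hne2
  have hgf : g = (fun x : ℝ => ((x : ℂ) - I * ρ * σ * u - d x) / ((x : ℂ) - I * ρ * σ * u + d x)) :=
    funext hg
  rw [hgf]
  refine HasDerivAt.congr_deriv hq ?_
  simp only [Pi.add_apply, Pi.sub_apply]
  rw [hD]
  generalize (κ : ℂ) - I * ρ * σ * u = b at *
  field_simp
  ring
end

section
/- Let u, κ, σ, ρ be real numbers and write i for the imaginary unit. Suppose d : ℝ → ℂ is differentiable at ρ, satisfies d(y)² = (κ − iyσu)² + σ²(iu + u²) for all y in a neighborhood of ρ, d(ρ) ≠ 0, and κ − iρσu + d(ρ) ≠ 0. Define g(y) = (κ − iyσu − d(y))/(κ − iyσu + d(y)). Then g is differentiable at ρ and its derivative at ρ equals 2iσu·g(ρ)/d(ρ). -/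
open Complex

theorem heston_deriv_g_rho (u κ σ ρ : ℝ) (d g : ℝ → ℂ)
    (hdiff : DifferentiableAt ℝ d ρ)
    (hsq : ∀ᶠ y in nhds ρ,
      d y ^ 2 = ((κ : ℂ) - I * y * σ * u) ^ 2 + σ ^ 2 * (I * u + u ^ 2))
    (hne : d ρ ≠ 0)
    (hne2 : (κ : ℂ) - I * ρ * σ * u + d ρ ≠ 0)
    (hg : ∀ y : ℝ, g y = ((κ : ℂ) - I * y * σ * u - d y) / ((κ : ℂ) - I * y * σ * u + d y)) :
    HasDerivAt g (2 * I * σ * u * g ρ / d ρ) ρ := by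
  have hd := hdiff.hasDerivAt
  set dd := deriv d ρ with hdd
  have ha : HasDerivAt (fun y : ℝ => (κ : ℂ) - I * y * σ * u) (-(I * σ * u)) ρ := by
    have h := (((((hasDerivAt_id ρ).ofReal_comp).const_mul I).mul_const (σ : ℂ)).mul_const
      (u : ℂ)).const_sub (κ : ℂ)
    simpa using h
  have h1 := hd.pow 2
  have h2 := (ha.pow 2).add_const ((σ : ℂ) ^ 2 * (I * u + u ^ 2))
  have h3 := (h2.congr_of_eventuallyEq (f₁ := d ^ 2) (by filter_upwards [hsq] with y hy; simpa using hy)).unique h1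
  have hgf : g = fun y : ℝ => ((κ : ℂ) - I * y * σ * u - d y) /
      ((κ : ℂ) - I * y * σ * u + d y) := funext hg
  have h4 := (ha.sub hd).div (ha.add hd) hne2
  rw [hg ρ, hgf]
  refine h4.congr_deriv ?_
  simp only [Pi.add_apply, Pi.sub_apply]
  generalize (κ : ℂ) - I * ρ * σ * u = a at *
  have h5 : d ρ * dd = a * (-(I * σ * u)) := by
    norm_num at h3
    linear_combination (-1 / 2) * h3
  have h6 : dd = a * (-(I * σ * u)) / d ρ := by
    rw [← h5]; field_simp
  rw [h6]
  field_simp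
  ring
end

section
/- Let u, κ, ρ, σ be real numbers and write i for the imaginary unit. Suppose d : ℝ → ℂ is differentiable at σ, satisfies d(s)² = (κ − iρsu)² + s²(iu + u²) for all s in a neighborhood of σ, d(σ) ≠ 0, and κ − iρσu + d(σ) ≠ 0. Define g(s) = (κ − iρsu − d(s))/(κ − iρsu + d(s)). Then g is differentiable at σ and its derivative at σ equals −2κσ(iu + u²)/(d(σ)·(κ − iρσu + d(σ))²). -/
open Complex

theorem heston_deriv_g_sigma (u κ ρ σ : ℝ) (d g : ℝ → ℂ)
    (hdiff : DifferentiableAt ℝ d σ)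
    (hsq : ∀ᶠ s in nhds σ,
      d s ^ 2 = ((κ : ℂ) - I * ρ * s * u) ^ 2 + s ^ 2 * (I * u + u ^ 2))
    (hne : d σ ≠ 0)
    (hne2 : (κ : ℂ) - I * ρ * σ * u + d σ ≠ 0)
    (hg : ∀ s : ℝ, g s = ((κ : ℂ) - I * ρ * s * u - d s) / ((κ : ℂ) - I * ρ * s * u + d s)) :
    HasDerivAt g
      (-2 * κ * σ * (I * u + u ^ 2) / (d σ * ((κ : ℂ) - I * ρ * σ * u + d σ) ^ 2)) σ := by
  have hs : HasDerivAt (fun s : ℝ => (s : ℂ)) 1 σ := Complex.ofRealCLM.hasDerivAt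
  have hb : HasDerivAt (fun s : ℝ => (κ : ℂ) - I * ρ * s * u) (-(I * ρ * 1 * u)) σ :=
    ((hs.const_mul (I * (ρ : ℂ))).mul_const (u : ℂ)).const_sub (κ : ℂ)
  have hd := hdiff.hasDerivAt
  have h1 := hd.fun_pow 2
  have h2 := (hb.fun_pow 2).fun_add ((hs.fun_pow 2).mul_const (I * u + (u : ℂ) ^ 2))
  have h3 := h1.unique (h2.congr_of_eventuallyEq hsq)
  have h0 := hsq.self_of_nhds
  have hq := (hb.fun_sub hd).fun_div (hb.fun_add hd) hne2
  have hgf : g = fun s : ℝ => ((κ : ℂ) - I * ρ * s * u - d s) / ((κ : ℂ) - I * ρ * s * u + d s) :=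
    funext hg
  rw [hgf]
  refine hq.congr_deriv ?_
  generalize deriv d σ = e at *
  rw [div_eq_div_iff (pow_ne_zero 2 hne2) (mul_ne_zero hne (pow_ne_zero 2 hne2))]
  norm_num at h3
  set b : ℂ := (κ : ℂ) - I * ρ * σ * u with hbdef
  have key : 2 * (-(I * ρ * u) * d σ - b * e) * d σ = -2 * κ * σ * (I * u + (u : ℂ) ^ 2) := by
    have hk : (κ : ℂ) = b + I * ρ * σ * u := by rw [hbdef]; ring
    rw [hk]
    linear_combination (-(2 * I * ρ * u)) * h0 - b * h3
  linear_combination ((b + d σ) ^ 2) * key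
end

section
/- Let u, κ, σ, ρ be real numbers with σ ≠ 0 and write i for the imaginary unit. Suppose d : ℝ → ℂ is differentiable at ρ, satisfies d(y)² = (κ − iyσu)² + σ²(iu + u²) for all y in a neighborhood of ρ, and d(ρ) ≠ 0. Define B(y) = (κ − iyσu − d(y))/σ². Then B is differentiable at ρ and its derivative at ρ equals iu(κ − iρσu − d(ρ))/(σ d(ρ)). -/
open Complex

theorem heston_deriv_B_rho (u κ σ ρ : ℝ) (hσ : σ ≠ 0) (d B : ℝ → ℂ)
    (hdiff : DifferentiableAt ℝ d ρ)
    (hsq : ∀ᶠ y in nhds ρ,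
      d y ^ 2 = ((κ : ℂ) - I * y * σ * u) ^ 2 + σ ^ 2 * (I * u + u ^ 2))
    (hne : d ρ ≠ 0)
    (hB : ∀ y : ℝ, B y = ((κ : ℂ) - I * y * σ * u - d y) / (σ : ℂ) ^ 2) :
    HasDerivAt B (I * u * ((κ : ℂ) - I * ρ * σ * u - d ρ) / ((σ : ℂ) * d ρ)) ρ := by
  have hσ' : (σ : ℂ) ≠ 0 := by exact_mod_cast hσ
  have hd := hdiff.hasDerivAt
  have hof : HasDerivAt (fun y : ℝ => (y : ℂ)) 1 ρ := Complex.ofRealCLM.hasDerivAt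
  have ha : HasDerivAt (fun y : ℝ => (κ : ℂ) - I * y * σ * u) (-(I * 1 * σ * u)) ρ :=
    (((hof.const_mul I).mul_const (σ : ℂ)).mul_const (u : ℂ)).const_sub (κ : ℂ)
  have h1 := hd.fun_pow 2
  have h2 := ((ha.fun_pow 2).add_const ((σ : ℂ) ^ 2 * (I * u + u ^ 2))).congr_of_eventuallyEq hsq
  have h3 := h1.unique h2
  have hBf : B = fun y : ℝ => ((κ : ℂ) - I * y * σ * u - d y) / (σ : ℂ) ^ 2 := funext hB
  rw [hBf]
  have h4 := (ha.fun_sub hd).div_const ((σ : ℂ) ^ 2)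
  refine h4.congr_deriv ?_
  norm_num at h3
  rw [div_eq_div_iff (pow_ne_zero 2 hσ') (mul_ne_zero hσ' hne)]
  linear_combination (-(σ : ℂ) / 2) * h3
end

section
/- Let u, ρ, σ, κ, τ be real numbers and write i for the imaginary unit. Suppose d : ℝ → ℂ is differentiable at κ, satisfies d(x)² = (x − iρσu)² + σ²(iu + u²) for all x in a neighborhood of κ, with d(κ) ≠ 0 and κ − iρσu + d(κ) ≠ 0. Define g(x) = (x − iρσu − d(x))/(x − iρσu + d(x)), a(x) = exp(−τ d(x)), and A(x) = (1 − a(x))/(1 − g(x)a(x)), and assume 1 − g(κ)a(κ) ≠ 0. Then A is differentiable at κ and its derivative at κ equals (τ a(κ)(κ − iρσu)(1 − g(κ)) − 2 a(κ) g(κ)(1 − a(κ))) / (d(κ)(1 − g(κ)a(κ))²). -/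
open Complex

theorem heston_deriv_A_kappa (u ρ σ κ τ : ℝ) (d g a A : ℝ → ℂ)
    (hdiff : DifferentiableAt ℝ d κ)
    (hsq : ∀ᶠ x in nhds κ,
      d x ^ 2 = ((x : ℂ) - I * ρ * σ * u) ^ 2 + σ ^ 2 * (I * u + u ^ 2))
    (hne : d κ ≠ 0)
    (hne2 : (κ : ℂ) - I * ρ * σ * u + d κ ≠ 0)
    (hg : ∀ x : ℝ, g x = ((x : ℂ) - I * ρ * σ * u - d x) / ((x : ℂ) - I * ρ * σ * u + d x))
    (ha : ∀ x : ℝ, a x = Complex.exp (-(τ * d x)))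
    (hA : ∀ x : ℝ, A x = (1 - a x) / (1 - g x * a x))
    (hne3 : 1 - g κ * a κ ≠ 0) :
    HasDerivAt A
      ((τ * a κ * ((κ : ℂ) - I * ρ * σ * u) * (1 - g κ) - 2 * a κ * g κ * (1 - a κ)) /
        (d κ * (1 - g κ * a κ) ^ 2)) κ := by
  have hx : HasDerivAt (fun x : ℝ => (x : ℂ) - I * ρ * σ * u) 1 κ :=
    (HasDerivAt.ofReal_comp (hasDerivAt_id κ)).sub_const _
  have hd0 := hdiff.hasDerivAt
  have h1 : HasDerivAt (fun x : ℝ => d x ^ 2) (2 * d κ * deriv d κ) κ := by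
    have := hd0.fun_pow 2
    simpa using this
  have h2 : HasDerivAt (fun x : ℝ => d x ^ 2) (2 * ((κ : ℂ) - I * ρ * σ * u)) κ := by
    have := ((hx.fun_pow 2).add_const ((σ : ℂ) ^ 2 * (I * u + u ^ 2))).congr_of_eventuallyEq hsq
    simpa using this
  have h3 := h1.unique h2
  have h4 : deriv d κ = ((κ : ℂ) - I * ρ * σ * u) / d κ := by
    rw [eq_div_iff hne]
    linear_combination h3 / 2
  rw [h4] at hd0
  have hgd : HasDerivAt g (-2 * g κ / d κ) κ := by
    have e : g = fun x : ℝ => ((x : ℂ) - I * ρ * σ * u - d x) / ((x : ℂ) - I * ρ * σ * u + d x) :=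
      funext hg
    have := (hx.fun_sub hd0).fun_div (hx.fun_add hd0) hne2
    rw [← e] at this
    refine HasDerivAt.congr_deriv this ?_
    rw [hg κ]
    generalize (κ : ℂ) - I * ρ * σ * u = b at *
    field_simp
    ring
  have had : HasDerivAt a (-(τ * a κ * ((κ : ℂ) - I * ρ * σ * u)) / d κ) κ := by
    have e : a = fun x : ℝ => Complex.exp (-(τ * d x)) := funext ha
    have := ((hd0.const_mul (τ : ℂ)).fun_neg).cexp
    rw [← e, ← ha κ] at this
    refine HasDerivAt.congr_deriv this ?_
    ring
  have e : A = fun x : ℝ => (1 - a x) / (1 - g x * a x) := funext hA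
  have := (had.const_sub 1).fun_div ((hgd.fun_mul had).const_sub 1) hne3
  rw [← e] at this
  refine HasDerivAt.congr_deriv this ?_
  generalize (κ : ℂ) - I * ρ * σ * u = b at *
  field_simp
  ring
end

section
/- Let u, ρ, σ, κ, τ be real numbers with σ ≠ 0 and write i for the imaginary unit. Suppose d : ℝ → ℂ is differentiable at κ, satisfies d(x)² = (x − iρσu)² + σ²(iu + u²) for all x in a neighborhood of κ, with d(κ) ≠ 0 and κ − iρσu + d(κ) ≠ 0. Define g(x) = (x − iρσu − d(x))/(x − iρσu + d(x)), a(x) = exp(−τ d(x)), and D(x) = ((x − iρσu − d(x))/σ²)·(1 − a(x))/(1 − g(x)a(x)), and assume 1 − g(κ)a(κ) ≠ 0. Then D is differentiable at κ and, writing c = κ − iρσu and evaluating d, g, a at κ, its derivative at κ equals (c − d)·(τ a c (1 − g) − (1 − a)(1 + a g)) / (σ² d (1 − a g)²). -/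
open Complex

theorem heston_deriv_D_kappa (u ρ σ κ τ : ℝ) (hσ : σ ≠ 0) (d g a D : ℝ → ℂ)
    (hdiff : DifferentiableAt ℝ d κ)
    (hsq : ∀ᶠ x in nhds κ,
      d x ^ 2 = ((x : ℂ) - I * ρ * σ * u) ^ 2 + σ ^ 2 * (I * u + u ^ 2))
    (hne : d κ ≠ 0)
    (hne2 : (κ : ℂ) - I * ρ * σ * u + d κ ≠ 0)
    (hg : ∀ x : ℝ, g x = ((x : ℂ) - I * ρ * σ * u - d x) / ((x : ℂ) - I * ρ * σ * u + d x))
    (ha : ∀ x : ℝ, a x = Complex.exp (-(τ * d x)))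
    (hD : ∀ x : ℝ, D x = (((x : ℂ) - I * ρ * σ * u - d x) / (σ : ℂ) ^ 2) *
      ((1 - a x) / (1 - g x * a x)))
    (hne3 : 1 - g κ * a κ ≠ 0) :
    HasDerivAt D
      ((((κ : ℂ) - I * ρ * σ * u) - d κ) *
          (τ * a κ * ((κ : ℂ) - I * ρ * σ * u) * (1 - g κ) - (1 - a κ) * (1 + a κ * g κ)) /
        ((σ : ℂ) ^ 2 * d κ * (1 - a κ * g κ) ^ 2)) κ := by
  have hid : HasDerivAt (fun x : ℝ => (x : ℂ) - I * ρ * σ * u) 1 κ :=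
    (Complex.ofRealCLM.hasDerivAt (x := κ)).sub_const _
  have hd0 := hdiff.hasDerivAt
  have hdd : deriv d κ = ((κ : ℂ) - I * ρ * σ * u) / d κ := by
    have h1 := hd0.fun_pow 2
    have h2 := ((hid.fun_pow 2).add_const ((σ : ℂ) ^ 2 * (I * u + u ^ 2))).congr_of_eventuallyEq hsq
    have h3 := h1.unique h2
    rw [eq_div_iff hne]
    norm_num at h3
    linear_combination h3 / 2
  rw [hdd] at hd0
  have hσ' : (σ : ℂ) ≠ 0 := by exact_mod_cast hσ
  have hN := hid.fun_sub hd0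
  have hM := hid.fun_add hd0
  have hG : HasDerivAt g (-2 * g κ / d κ) κ := by
    have h := hN.fun_div hM hne2
    rw [show g = _ from funext hg]
    refine HasDerivAt.congr_deriv h ?_
    beta_reduce
    generalize (κ : ℂ) - I * ρ * σ * u = c at *
    generalize d κ = e at *
    field_simp
    ring
  have hA : HasDerivAt a (-(τ * a κ * ((κ : ℂ) - I * ρ * σ * u) / d κ)) κ := by
    have h := ((hd0.const_mul (τ : ℂ)).fun_neg).cexp
    rw [show a = _ from funext ha]
    refine HasDerivAt.congr_deriv h ?_
    ring
  have h := (hN.div_const ((σ : ℂ) ^ 2)).fun_mul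
    ((hA.const_sub 1).fun_div ((hG.fun_mul hA).const_sub 1) hne3)
  rw [show D = _ from funext hD]
  refine HasDerivAt.congr_deriv h ?_
  have hne4 : 1 - a κ * g κ ≠ 0 := by rwa [mul_comm]
  rw [mul_comm (g κ) (a κ)]
  generalize (κ : ℂ) - I * ρ * σ * u = c
  generalize g κ = G at *
  generalize a κ = A at *
  generalize d κ = d at *
  field_simp
  ring
end

section
/- Let u, κ, σ, ρ, τ be real numbers with σ ≠ 0 and write i for the imaginary unit. Suppose d : ℝ → ℂ is differentiable at ρ, satisfies d(y)² = (κ − iyσu)² + σ²(iu + u²) for all y in a neighborhood of ρ, with d(ρ) ≠ 0 and κ − iρσu + d(ρ) ≠ 0. Define g(y) = (κ − iyσu − d(y))/(κ − iyσu + d(y)), a(y) = exp(−τ d(y)), and D(y) = ((κ − iyσu − d(y))/σ²)·(1 − a(y))/(1 − g(y)a(y)), and assume 1 − g(ρ)a(ρ) ≠ 0. Then D is differentiable at ρ and, writing c = κ − iρσu and evaluating d, g, a at ρ, its derivative at ρ equals iu(c − d)·((1 + a g)(1 − a) − τ a (1 − g) c) / (σ d (1 − a g)²). -/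
open Complex

theorem heston_deriv_D_rho (u κ σ ρ τ : ℝ) (hσ : σ ≠ 0) (d g a D : ℝ → ℂ)
    (hdiff : DifferentiableAt ℝ d ρ)
    (hsq : ∀ᶠ y in nhds ρ,
      d y ^ 2 = ((κ : ℂ) - I * y * σ * u) ^ 2 + σ ^ 2 * (I * u + u ^ 2))
    (hne : d ρ ≠ 0)
    (hne2 : (κ : ℂ) - I * ρ * σ * u + d ρ ≠ 0)
    (hg : ∀ y : ℝ, g y = ((κ : ℂ) - I * y * σ * u - d y) / ((κ : ℂ) - I * y * σ * u + d y))
    (ha : ∀ y : ℝ, a y = Complex.exp (-(τ * d y)))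
    (hD : ∀ y : ℝ, D y = (((κ : ℂ) - I * y * σ * u - d y) / (σ : ℂ) ^ 2) *
      ((1 - a y) / (1 - g y * a y)))
    (hne3 : 1 - g ρ * a ρ ≠ 0) :
    HasDerivAt D
      (I * u * (((κ : ℂ) - I * ρ * σ * u) - d ρ) *
          ((1 + a ρ * g ρ) * (1 - a ρ) - τ * a ρ * (1 - g ρ) * ((κ : ℂ) - I * ρ * σ * u)) /
        ((σ : ℂ) * d ρ * (1 - a ρ * g ρ) ^ 2)) ρ := by
  have hσ' : (σ : ℂ) ≠ 0 := by exact_mod_cast hσ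
  have hd := hdiff.hasDerivAt
  set d' := deriv d ρ with hd'
  have hy : HasDerivAt (fun y : ℝ => (y : ℂ)) 1 ρ := Complex.ofRealCLM.hasDerivAt
  have hc : HasDerivAt (fun y : ℝ => (κ : ℂ) - I * y * σ * u) (-(I * σ * u)) ρ := by
    have h := (((hy.const_mul I).mul_const (σ : ℂ)).mul_const (u : ℂ)).const_sub (κ : ℂ)
    refine h.congr_deriv ?_
    ring
  have hrel : d ρ * d' = (-(I * σ * u)) * ((κ : ℂ) - I * ρ * σ * u) := by
    have h1 := hd.pow 2
    have h2 := (hc.pow 2).add_const ((σ : ℂ) ^ 2 * (I * u + u ^ 2))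
    have h3 := h1.unique (h2.congr_of_eventuallyEq hsq)
    have h2' : (2 : ℂ) ≠ 0 := two_ne_zero
    apply mul_left_cancel₀ h2'
    simp only [Nat.cast_ofNat, Nat.add_one_sub_one, pow_one] at h3
    linear_combination h3
  have hD' : D = fun y : ℝ => (((κ : ℂ) - I * y * σ * u - d y) / (σ : ℂ) ^ 2) *
      ((1 - a y) / (1 - g y * a y)) := funext hD
  have hgd : HasDerivAt g (2 * (I * σ * u) * g ρ / d ρ) ρ := by
    have h := (hc.sub hd).div (hc.add hd) hne2
    rw [funext hg]
    refine h.congr_deriv ?_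
    have e : d' = (-(I * σ * u)) * ((κ : ℂ) - I * ρ * σ * u) / d ρ := by
      rw [← hrel]; field_simp
    simp only [Pi.sub_apply, Pi.add_apply]
    rw [e]
    generalize (κ : ℂ) - I * ρ * σ * u = c at *
    generalize I * (σ : ℂ) * u = s at *
    field_simp
    ring
  have had : HasDerivAt a (τ * a ρ * ((κ : ℂ) - I * ρ * σ * u) * (I * σ * u) / d ρ) ρ := by
    have h := ((hd.const_mul (τ : ℂ)).neg).cexp
    rw [funext ha]
    refine h.congr_deriv ?_
    have e : d' = (-(I * σ * u)) * ((κ : ℂ) - I * ρ * σ * u) / d ρ := by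
      rw [← hrel]; field_simp
    simp only [Pi.neg_apply]
    rw [e]
    ring
  have hfin := ((hc.sub hd).div_const ((σ : ℂ) ^ 2)).mul
    ((had.const_sub 1).div ((hgd.mul had).const_sub 1) hne3)
  rw [hD']
  refine hfin.congr_deriv ?_
  have e : d' = (-(I * σ * u)) * ((κ : ℂ) - I * ρ * σ * u) / d ρ := by
    rw [← hrel]; field_simp
  have hne4 : 1 - a ρ * g ρ ≠ 0 := by rwa [mul_comm]
  simp only [Pi.sub_apply, Pi.mul_apply, Pi.div_apply]
  rw [e, mul_comm (g ρ) (a ρ)]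
  clear hfin had hgd hD' hrel hc hne3 hD ha hg hsq e
  generalize (κ : ℂ) - I * ρ * σ * u = c at *
  generalize a ρ = A at *
  generalize g ρ = G at *
  generalize d ρ = d0 at *
  field_simp
  ring
end

section
/- Let u, κ, ρ, σ, τ be real numbers with σ ≠ 0 and write i for the imaginary unit. Suppose d : ℝ → ℂ is differentiable at σ, satisfies d(s)² = (κ − iρsu)² + s²(iu + u²) for all s in a neighborhood of σ, with d(σ) ≠ 0 and κ − iρσu + d(σ) ≠ 0. Define g(s) = (κ − iρsu − d(s))/(κ − iρsu + d(s)), a(s) = exp(−τ d(s)), and D(s) = ((κ − iρsu − d(s))/s²)·(1 − a(s))/(1 − g(s)a(s)), and assume 1 − g(σ)a(σ) ≠ 0. Then D is differentiable at σ and, evaluating d, g, a at σ, its derivative at σ equals −(iu + u²)/(σ d (1 − g a)² (κ − iρσu + d)) · [ (1 − a)(κ a g + κ − d + d a g) − τ σ a (1 − g)(iρu(κ − iρσu) − σ(iu + u²)) ]. -/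
open Complex

theorem heston_deriv_D_sigma (u κ ρ σ τ : ℝ) (hσ : σ ≠ 0) (d g a D : ℝ → ℂ)
    (hdiff : DifferentiableAt ℝ d σ)
    (hsq : ∀ᶠ s in nhds σ,
      d s ^ 2 = ((κ : ℂ) - I * ρ * s * u) ^ 2 + s ^ 2 * (I * u + u ^ 2))
    (hne : d σ ≠ 0)
    (hne2 : (κ : ℂ) - I * ρ * σ * u + d σ ≠ 0)
    (hg : ∀ s : ℝ, g s = ((κ : ℂ) - I * ρ * s * u - d s) / ((κ : ℂ) - I * ρ * s * u + d s))
    (ha : ∀ s : ℝ, a s = Complex.exp (-(τ * d s)))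
    (hD : ∀ s : ℝ, D s = (((κ : ℂ) - I * ρ * s * u - d s) / (s : ℂ) ^ 2) *
      ((1 - a s) / (1 - g s * a s)))
    (hne3 : 1 - g σ * a σ ≠ 0) :
    HasDerivAt D
      (-(I * u + u ^ 2) /
          ((σ : ℂ) * d σ * (1 - g σ * a σ) ^ 2 * ((κ : ℂ) - I * ρ * σ * u + d σ)) *
        ((1 - a σ) * (κ * a σ * g σ + κ - d σ + d σ * a σ * g σ) -
          τ * σ * a σ * (1 - g σ) *
            (I * ρ * u * ((κ : ℂ) - I * ρ * σ * u) - σ * (I * u + u ^ 2)))) σ := by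
  obtain ⟨dder, hd⟩ : ∃ dder, HasDerivAt d dder σ := ⟨_, hdiff.hasDerivAt⟩
  have hs : HasDerivAt (fun s : ℝ => (s : ℂ)) 1 σ := Complex.ofRealCLM.hasDerivAt
  have hb : HasDerivAt (fun s : ℝ => (κ : ℂ) - I * ρ * s * u) (-(I * ρ * u)) σ := by
    have h := ((hs.const_mul (I * (ρ : ℂ))).mul_const (u : ℂ)).const_sub (κ : ℂ)
    simpa using h
  have hdd : d σ * dder = ((κ : ℂ) - I * ρ * σ * u) * (-(I * ρ * u)) + σ * (I * u + u ^ 2) := by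
    have h1 := hd.pow 2
    have h2 := (hb.pow 2).add ((hs.pow 2).mul_const (I * (u : ℂ) + u ^ 2))
    have h3 := h1.unique (h2.congr_of_eventuallyEq (by
      filter_upwards [hsq] with s h
      simpa using h))
    simp at h3
    linear_combination h3 / 2
  have hA : HasDerivAt a (a σ * (-(τ * dder))) σ := by
    have h := (hd.const_mul (τ : ℂ)).neg.cexp
    have e : a = fun s => Complex.exp (-(τ * d s)) := funext ha
    rw [e]
    exact h
  have hM : HasDerivAt (fun s : ℝ => ((κ : ℂ) - I * ρ * s * u + d s)
      - ((κ : ℂ) - I * ρ * s * u - d s) * a s) _ σ := (hb.add hd).sub ((hb.sub hd).mul hA)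
  have hMg : ∀ s : ℝ, (κ : ℂ) - I * ρ * s * u + d s ≠ 0 →
      ((κ : ℂ) - I * ρ * s * u + d s) - ((κ : ℂ) - I * ρ * s * u - d s) * a s
      = ((κ : ℂ) - I * ρ * s * u + d s) * (1 - g s * a s) := by
    intro s h
    rw [hg]
    field_simp
  have hM0 : ((κ : ℂ) - I * ρ * σ * u + d σ) - ((κ : ℂ) - I * ρ * σ * u - d σ) * a σ ≠ 0 := by
    rw [hMg σ hne2]
    exact mul_ne_zero hne2 hne3
  have hσc : (σ : ℂ) ≠ 0 := by exact_mod_cast hσ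
  have hF := ((hA.const_sub 1).const_mul (-(I * (u : ℂ) + u ^ 2))).div hM hM0
  have hev : D =ᶠ[nhds σ] fun s : ℝ => (-(I * (u : ℂ) + u ^ 2) * (1 - a s)) /
      (((κ : ℂ) - I * ρ * s * u + d s) - ((κ : ℂ) - I * ρ * s * u - d s) * a s) := by
    filter_upwards [hsq, (hb.add hd).continuousAt.eventually_ne hne2,
      hs.continuousAt.eventually_ne hσc] with s h1 h2 h3
    have h2c : (κ : ℂ) - I * ρ * s * u + d s ≠ 0 := h2
    rw [hMg s h2c, hD s, ← div_div, mul_div_right_comm, mul_div_assoc]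
    congr 1
    rw [div_eq_div_iff (pow_ne_zero 2 h3) h2c]
    linear_combination -h1
  refine (hF.congr_of_eventuallyEq hev).congr_deriv ?_
  have hsq0 := hsq.self_of_nhds
  have hgm : g σ * ((κ : ℂ) - I * ρ * σ * u + d σ) = (κ : ℂ) - I * ρ * σ * u - d σ := by
    rw [hg]
    field_simp
  have hMσ := hMg σ hne2
  simp only [Pi.sub_apply] at *
  rw [hMσ]
  have hκ : (κ : ℂ) = ((κ : ℂ) - I * ρ * σ * u) + σ * (I * ρ * u) := by ring
  generalize hB : (κ : ℂ) - I * ρ * σ * u = B at *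
  generalize hG : g σ = G at *
  generalize a σ = A at *
  generalize d σ = d0 at *
  generalize hW : I * (u : ℂ) + u ^ 2 = W at *
  generalize hR : I * (ρ : ℂ) * u = R at *
  rw [hκ]
  have key : (-W * -(A * -(τ * dder)) * ((B + d0) * (1 - G * A)) -
      -W * (1 - A) * (-R + dder - ((-R - dder) * A + (B - d0) * (A * -(τ * dder))))) * (σ * d0)
      = -W * ((1 - A) * ((B + σ * R) * A * G + (B + σ * R) - d0 + d0 * A * G) -
          τ * σ * A * (1 - G) * (R * B - σ * W)) * (B + d0) := by
    linear_combination (-W) * (-σ * d0 * τ * dder * A ^ 2 - (1 - A) * A * (B + σ * R + d0)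
      - τ * σ * A * (R * B - σ * W)) * hgm
      + (-W) * σ * (2 * τ * A * d0 - (1 - A) * (1 + A)) * hdd + (-W) * (1 - A) * (1 + A) * hsq0
  rw [div_mul_eq_mul_div, div_eq_div_iff (by simp [hne2, hne3]) (by simp [hne, hne2, hne3, hσc])]
  linear_combination (B + d0) * (1 - G * A) ^ 2 * key
end

section
/- Let u, ρ, σ, κ, τ be real numbers and write i for the imaginary unit. Suppose d : ℝ → ℂ is differentiable at κ, satisfies d(x)² = (x − iρσu)² + σ²(iu + u²) for all x in a neighborhood of κ, with d(κ) ≠ 0 and κ − iρσu + d(κ) ≠ 0. Define g(x) = (x − iρσu − d(x))/(x − iρσu + d(x)), a(x) = exp(−τ d(x)), N(x) = (1 − a(x)g(x))/(1 − g(x)), and assume 1 − g(κ) ≠ 0 and 1 − g(κ)a(κ) ≠ 0. Let L : ℝ → ℂ be differentiable at κ with exp(L(x)) = N(x) for all x in a neighborhood of κ, and define M(x) = (x − iρσu − d(x))τ − 2L(x). Then M is differentiable at κ and, writing c = κ − iρσu and evaluating d, g, a at κ, its derivative at κ equals (c − d)·(2(1 − a) − τ d (1 − a g) − τ a (1 −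 g) c) / (d² (1 − a g)). -/
open Complex

theorem heston_deriv_M_kappa (u ρ σ κ τ : ℝ) (d g a N L M : ℝ → ℂ)
    (hdiff : DifferentiableAt ℝ d κ)
    (hsq : ∀ᶠ x in nhds κ,
      d x ^ 2 = ((x : ℂ) - I * ρ * σ * u) ^ 2 + σ ^ 2 * (I * u + u ^ 2))
    (hne : d κ ≠ 0)
    (hne2 : (κ : ℂ) - I * ρ * σ * u + d κ ≠ 0)
    (hg : ∀ x : ℝ, g x = ((x : ℂ) - I * ρ * σ * u - d x) / ((x : ℂ) - I * ρ * σ * u + d x))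
    (ha : ∀ x : ℝ, a x = Complex.exp (-(τ * d x)))
    (hN : ∀ x : ℝ, N x = (1 - a x * g x) / (1 - g x))
    (hne3 : 1 - g κ ≠ 0)
    (hne4 : 1 - g κ * a κ ≠ 0)
    (hLdiff : DifferentiableAt ℝ L κ)
    (hLexp : ∀ᶠ x in nhds κ, Complex.exp (L x) = N x)
    (hM : ∀ x : ℝ, M x = ((x : ℂ) - I * ρ * σ * u - d x) * τ - 2 * L x) :
    HasDerivAt M
      ((((κ : ℂ) - I * ρ * σ * u) - d κ) *
          (2 * (1 - a κ) - τ * d κ * (1 - a κ * g κ) -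
            τ * a κ * (1 - g κ) * ((κ : ℂ) - I * ρ * σ * u)) /
        (d κ ^ 2 * (1 - a κ * g κ))) κ := by
  have hc : HasDerivAt (fun x : ℝ => (x : ℂ) - I * ρ * σ * u) 1 κ :=
    (HasDerivAt.ofReal_comp (hasDerivAt_id κ)).sub_const _ |>.congr_deriv (by simp)
  obtain ⟨d', hd⟩ : ∃ d', HasDerivAt d d' κ := ⟨_, hdiff.hasDerivAt⟩
  obtain ⟨l, hl⟩ : ∃ l, HasDerivAt L l κ := ⟨_, hLdiff.hasDerivAt⟩
  have h1 := (hc.pow 2).add_const ((σ : ℂ) ^ 2 * (I * u + u ^ 2))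
  have h2 := (hd.pow 2).unique (h1.congr_of_eventuallyEq hsq)
  have hg' := (hc.sub hd).div (hc.add hd) hne2
  have hgf : g = (fun x : ℝ => (x : ℂ) - I * ρ * σ * u - d x) /
      (fun x : ℝ => (x : ℂ) - I * ρ * σ * u + d x) := funext hg
  have hg2 : HasDerivAt g _ κ := hg'.congr_of_eventuallyEq (Filter.Eventually.of_forall hg)
  have ha' : HasDerivAt a _ κ :=
    ((hd.const_mul (τ : ℂ)).neg.cexp).congr_of_eventuallyEq (Filter.Eventually.of_forall ha)
  have hN' : HasDerivAt N _ κ :=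
    (((ha'.mul hg2).const_sub 1).div (hg2.const_sub 1) hne3).congr_of_eventuallyEq
      (Filter.Eventually.of_forall hN)
  have h3 := hl.cexp.unique (hN'.congr_of_eventuallyEq hLexp)
  have hM' : HasDerivAt M _ κ :=
    (((hc.sub hd).mul_const (τ : ℂ)).sub (hl.const_mul 2)).congr_of_eventuallyEq
      (Filter.Eventually.of_forall hM)
  refine hM'.congr_deriv ?_
  have hgk := hg κ
  have hak := ha κ
  rw [hLexp.self_of_nhds, hN κ] at h3
  simp only [Pi.neg_apply, Pi.mul_apply, Pi.add_apply, Pi.sub_apply] at h3 h2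
  rw [← hak] at h3
  clear hM' hN' ha' hg2 hgf hg' h1 hM hLexp hN ha hg hsq
  generalize (κ : ℂ) - I * ρ * σ * u = c at *
  generalize d κ = D at *
  generalize a κ = A at *
  generalize g κ = G at *
  generalize (τ : ℂ) = t at *
  have hd2 : d' = c / D := by
    field_simp
    linear_combination h2 / 2
  have hgd : ((1 - d') * (c + D) - (c - D) * (1 + d')) / (c + D) ^ 2 = -2 * G / D := by
    rw [hd2, hgk]; field_simp; ring
  rw [hgd, hd2] at h3
  have hne5 : 1 - A * G ≠ 0 := by rwa [mul_comm]
  have hl2 : l = (t * A * G * c + 2 * A * G) / (D * (1 - A * G)) - 2 * G / (D * (1 - G)) := by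
    field_simp at h3 ⊢
    linear_combination h3
  have hG1 : 1 - G = 2 * D / (c + D) := by rw [hgk]; field_simp; ring
  have hcD : c - D = G * (c + D) := by rw [hgk]; field_simp
  have hc2 : c = D * (1 + G) / (1 - G) := by
    field_simp
    linear_combination hcD
  rw [hl2, hd2, hc2]
  field_simp
  ring
end
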